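/- For every integer k ≥ 1 and every complex number q with |q| < 1, one has (2k+1)! · (∏_{m=1}^∞ (1 − q^m))³ · A_k(q) = (−1)^k · ∑_{n=k}^∞ (−1)^n (2n+1) · ((n+k)!/(n−k)!) · q^{n(n+1)/2}. -/

import Mathlib

/-- MacMahon's generalized sum-of-divisors function `A_k(q)`, defined as the sum over all
strictly increasing `k`-tuples of positive integers. -/
noncomputable def macA (k : ℕ) (q : ℂ) : ℂ :=
  ∑' m : {m : Fin k → ℕ // StrictMono m ∧ ∀ i, 0 < m i},
    q ^ (∑ i, m.1 i) / ∏ i, (1 - q ^ m.1 i) ^ 2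

/-!
With `y = z + z⁻¹`, the finite Jacobi triple product becomes a polynomial identity
`∏_{1 ≤ i ≤ N} (1 - q ^ i * y + q ^ (2 * i)) = ∑_{n ≤ N} c_n * W_n(y)`, where `W_n` is the Chebyshev
polynomial with `W_n(z + z⁻¹) = z ^ (-n) + ⋯ + z ^ n`. Substituting `y = 2 - x` turns each factor
into `(1 - q ^ i) ^ 2 + q ^ i * x`, so the coefficient of `x ^ k` is `(q; q)_N ^ 2` times the
truncation of `A_k(q)` on the left, and an explicit combination of binomials on the right. As
`N → ∞`, dominated convergence applies and `c_n` tends to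
`(-1) ^ n * q ^ (n * (n + 1) / 2) / (q; q)_∞`, whose denominator accounts for the third power of
the Euler product.
-/

open Filter Finset Polynomial Topology
open Polynomial.Chebyshev (S S_add_one S_sub_one S_neg_one S_neg_two)

section GaussBinom

variable {R : Type*} [CommRing R]

/-- The Gaussian binomial coefficient `[n, k]_q`, defined through the `q`-Pascal rule so that it
makes sense in any commutative ring; it vanishes for `n < k`. -/
def gaussBinom (q : R) : ℕ → ℕ → R
  | _, 0 => 1
  | 0, _ + 1 => 0
  | n + 1, k + 1 => gaussBinom q n k + q ^ (k + 1) * gaussBinom q n (k + 1)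

/-- The finite Euler product `(q; q)_n = (1 - q) (1 - q ^ 2) ⋯ (1 - q ^ n)`. -/
def qPochhammer (q : R) (n : ℕ) : R := ∏ i ∈ range n, (1 - q ^ (i + 1))

variable (q : R)

@[simp]
lemma gaussBinom_zero_right (n : ℕ) : gaussBinom q n 0 = 1 := by
  cases n <;> rfl

lemma gaussBinom_succ_succ (n k : ℕ) :
    gaussBinom q (n + 1) (k + 1) = gaussBinom q n k + q ^ (k + 1) * gaussBinom q n (k + 1) := rfl

lemma gaussBinom_eq_zero_of_lt {n k : ℕ} (h : n < k) : gaussBinom q n k = 0 := by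
  induction n generalizing k with
  | zero => obtain ⟨k, rfl⟩ := Nat.exists_eq_succ_of_ne_zero h.ne'; rfl
  | succ n ih =>
    obtain ⟨k, rfl⟩ := Nat.exists_eq_succ_of_ne_zero (Nat.ne_zero_of_lt h)
    rw [gaussBinom_succ_succ, ih (by omega), ih (by omega), mul_zero, add_zero]

@[simp]
lemma gaussBinom_self (n : ℕ) : gaussBinom q n n = 1 := by
  induction n with
  | zero => rfl
  | succ n ih =>
    rw [gaussBinom_succ_succ, ih, gaussBinom_eq_zero_of_lt q n.lt_succ_self, mul_zero, add_zero]

lemma gaussBinom_add_succ_succ (n k : ℕ) :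
    gaussBinom q (n + k + 1) (k + 1) =
      q ^ n * gaussBinom q (n + k) k + gaussBinom q (n + k) (k + 1) := by
  induction n generalizing k with
  | zero => simp [gaussBinom_eq_zero_of_lt]
  | succ n ih =>
    induction k with
    | zero =>
      have h := ih 0
      simp only [add_zero, zero_add, gaussBinom_succ_succ, gaussBinom_zero_right] at h ⊢
      linear_combination q * h
    | succ k ih' =>
      have h := ih (k + 1)
      rw [show n + 1 + k = n + k + 1 by ring] at ih'
      rw [show n + (k + 1) = n + k + 1 by ring] at h
      rw [show n + 1 + (k + 1) = n + k + 1 + 1 by ring]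
      rw [gaussBinom_succ_succ q (n + k + 1 + 1)]
      simp only [gaussBinom_succ_succ q (n + k + 1)] at ih' h ⊢
      linear_combination ih' + q ^ (k + 2) * h

lemma gaussBinom_symm_add (n k : ℕ) : gaussBinom q (n + k) k = gaussBinom q (n + k) n := by
  induction n generalizing k with
  | zero => simp
  | succ n ih =>
    induction k with
    | zero => simp
    | succ k ih' =>
      have h := ih (k + 1)
      have pascal := gaussBinom_add_succ_succ q (k + 1) n
      rw [show n + (k + 1) = n + 1 + k by ring] at h
      rw [show k + 1 + n = n + 1 + k by ring] at pascal
      rw [show n + 1 + (k + 1) = n + 1 + k + 1 by ring, pascal, gaussBinom_succ_succ, ih', h]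
      ring

lemma gaussBinom_add_two (n k : ℕ) :
    gaussBinom q (n + k + 2) (k + 2) = q ^ n * gaussBinom q (n + k) k +
      (1 + q ^ (n + k + 1)) * gaussBinom q (n + k) (k + 1) +
        q ^ (k + 2) * gaussBinom q (n + k) (k + 2) := by
  rw [gaussBinom_succ_succ, gaussBinom_add_succ_succ]
  cases n with
  | zero => simp [gaussBinom_eq_zero_of_lt]
  | succ n =>
    have pascal := gaussBinom_add_succ_succ q n (k + 1)
    rw [show n + (k + 1) = n + 1 + k by ring] at pascal
    rw [pascal]
    ring

lemma qPochhammer_succ (n : ℕ) :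
    qPochhammer q (n + 1) = qPochhammer q n * (1 - q ^ (n + 1)) :=
  prod_range_succ _ _

lemma gaussBinom_mul_qPochhammer_mul_qPochhammer (n k : ℕ) :
    gaussBinom q (n + k) k * qPochhammer q k * qPochhammer q n = qPochhammer q (n + k) := by
  induction n generalizing k with
  | zero => simp [qPochhammer]
  | succ n ih =>
    induction k with
    | zero => simp [qPochhammer]
    | succ k ih' =>
      have h := ih (k + 1)
      rw [show n + (k + 1) = n + 1 + k by ring] at h
      rw [← add_assoc, gaussBinom_succ_succ, qPochhammer_succ q (n + 1 + k)]
      rw [qPochhammer_succ q k] at h ⊢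
      rw [qPochhammer_succ q n] at ih' ⊢
      linear_combination (1 - q ^ (k + 1)) * ih' + q ^ (k + 1) * (1 - q ^ (n + 1)) * h

variable {K : Type*} [Field K] {r : K}

lemma qPochhammer_ne_zero (hr : ∀ n, r ^ (n + 1) ≠ 1) (n : ℕ) : qPochhammer r n ≠ 0 :=
  prod_ne_zero_iff.mpr fun i _ => sub_ne_zero.mpr (hr i).symm

lemma gaussBinom_add_eq_div (hr : ∀ n, r ^ (n + 1) ≠ 1) (n k : ℕ) :
    gaussBinom r (n + k) k = qPochhammer r (n + k) / (qPochhammer r k * qPochhammer r n) := by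
  rw [eq_div_iff (mul_ne_zero (qPochhammer_ne_zero hr k) (qPochhammer_ne_zero hr n)), ← mul_assoc,
    gaussBinom_mul_qPochhammer_mul_qPochhammer]

end GaussBinom

section FiniteTripleProduct

variable {R : Type*} [CommRing R]

/-- The coefficients of the finite Jacobi triple product: those of
`z ^ (-n) + ⋯ + z ^ n` in `∏ i ∈ range N, (1 - z q ^ (i + 1)) (1 - z⁻¹ q ^ (i + 1))`. -/
def tripleCoeff (q : R) (N n : ℕ) : R :=
  (-1) ^ n * q ^ ((n + 1).choose 2) * gaussBinom q (2 * N + 1) (N + n + 1)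

/-- The Chebyshev polynomial of the fourth kind, rescaled as `S` is, so that
`W_n(z + z⁻¹) = z ^ (-n) + ⋯ + z ^ n`. -/
noncomputable def chebyshevW (R : Type*) [CommRing R] (n : ℤ) : R[X] := S R n + S R (n - 1)

lemma X_mul_chebyshevW (n : ℤ) :
    X * chebyshevW R n = chebyshevW R (n + 1) + chebyshevW R (n - 1) := by
  simp only [chebyshevW, S_add_one, S_sub_one R (n - 1), add_sub_cancel_right, sub_add_cancel]
  ring

lemma chebyshevW_zero : chebyshevW R 0 = 1 := by simp [chebyshevW]

lemma chebyshevW_neg_one : chebyshevW R (-1) = -1 := by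
  rw [chebyshevW, S_neg_one, show (-1 - 1 : ℤ) = -2 by norm_num, S_neg_two, zero_add]

variable (q : R)

lemma tripleCoeff_eq_zero_of_lt {N n : ℕ} (h : N < n) : tripleCoeff q N n = 0 := by
  rw [tripleCoeff, gaussBinom_eq_zero_of_lt q (by omega), mul_zero]

-- By symmetry of the Gaussian binomials, the coefficient of index `-1` is `-tripleCoeff q N 0`.
lemma tripleCoeff_succ_zero (N : ℕ) :
    tripleCoeff q (N + 1) 0 = (1 + (q ^ (N + 1)) ^ 2) * tripleCoeff q N 0 -
      q ^ (N + 1) * (tripleCoeff q N 1 - tripleCoeff q N 0) := by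
  have symm := gaussBinom_symm_add q (N + 1) N
  have pascal := gaussBinom_add_two q (N + 1) N
  rw [show N + 1 + N = 2 * N + 1 by ring] at symm pascal
  simp only [tripleCoeff, mul_add, mul_one, add_zero, zero_add, pow_zero, pow_one, one_mul,
    Nat.choose_self, Nat.choose_succ_self, add_right_comm _ 1] at pascal ⊢
  rw [pascal, symm]
  ring

lemma tripleCoeff_succ_succ (N n : ℕ) :
    tripleCoeff q (N + 1) (n + 1) = (1 + (q ^ (N + 1)) ^ 2) * tripleCoeff q N (n + 1) -
      q ^ (N + 1) * (tripleCoeff q N (n + 2) + tripleCoeff q N n) := by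
  rcases lt_or_ge N n with h | h
  · simp [tripleCoeff_eq_zero_of_lt q, h, show N < n + 1 by omega, show N < n + 2 by omega]
  obtain ⟨d, rfl⟩ := Nat.exists_eq_add_of_le' h
  have pascal := gaussBinom_add_two q d (d + n + n + 1)
  rw [show d + (d + n + n + 1) = 2 * (d + n) + 1 by ring] at pascal
  have tri (m : ℕ) : (m + 2).choose 2 = (m + 1) + (m + 1).choose 2 := by
    rw [Nat.choose_succ_succ' (m + 1) 1, Nat.choose_one_right]
  simp only [tripleCoeff, ← add_assoc, tri,
    show 2 * (d + n + 1) + 1 = 2 * (d + n) + 1 + 2 by ring,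
    show d + n + 1 + n + 1 + 1 = d + n + n + 1 + 2 by ring, pascal]
  ring

lemma sum_tripleCoeff_succ_mul_chebyshevW (N M : ℕ) :
    ∑ n ∈ range (M + 1), C (tripleCoeff q (N + 1) n) * chebyshevW R n =
      (1 - C (q ^ (N + 1)) * X + C (q ^ (N + 1)) ^ 2) *
        ∑ n ∈ range (M + 1), C (tripleCoeff q N n) * chebyshevW R n +
      C (q ^ (N + 1)) * (C (tripleCoeff q N M) * chebyshevW R (M + 1) -
        C (tripleCoeff q N (M + 1)) * chebyshevW R M) := by
  induction M with
  | zero =>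
    have h := X_mul_chebyshevW (R := R) 0
    rw [zero_sub, chebyshevW_neg_one] at h
    simp only [zero_add, sum_range_one, tripleCoeff_succ_zero, Nat.cast_zero, map_sub, map_add,
      map_mul, map_one, map_pow, chebyshevW_zero] at h ⊢
    linear_combination C q ^ (N + 1) * C (tripleCoeff q N 0) * h
  | succ M ih =>
    have h := X_mul_chebyshevW (R := R) (M + 1)
    rw [add_sub_cancel_right] at h
    rw [sum_range_succ, ih, sum_range_succ _ (M + 1), tripleCoeff_succ_succ]
    simp only [Nat.cast_add, Nat.cast_one, map_sub, map_add, map_mul, map_one, map_pow]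
    linear_combination C q ^ (N + 1) * C (tripleCoeff q N (M + 1)) * h

theorem prod_one_sub_mul_X_add_sq_eq_sum (N : ℕ) :
    ∏ i ∈ range N, (1 - C (q ^ (i + 1)) * X + C (q ^ (i + 1)) ^ 2) =
      ∑ n ∈ range (N + 1), C (tripleCoeff q N n) * chebyshevW R n := by
  induction N with
  | zero => simp [tripleCoeff, chebyshevW_zero]
  | succ N ih =>
    rw [sum_tripleCoeff_succ_mul_chebyshevW, sum_range_succ _ (N + 1), prod_range_succ, ih,
      tripleCoeff_eq_zero_of_lt q N.lt_succ_self,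
      tripleCoeff_eq_zero_of_lt q (N.lt_succ_self.trans (N + 1).lt_succ_self)]
    simp only [map_zero, zero_mul, add_zero, sub_zero, mul_zero]
    ring

end FiniteTripleProduct

section Coefficients

lemma coeff_prod_one_add_C_mul_X {R ι : Type*} [CommSemiring R] (s : Finset ι) (f : ι → R)
    (k : ℕ) :
    (∏ i ∈ s, (1 + C (f i) * X)).coeff k = ∑ t ∈ s.powersetCard k, ∏ i ∈ t, f i := by
  simp only [prod_one_add, prod_mul_distrib, prod_const, ← map_prod, finsetSum_coeff,
    coeff_C_mul_X_pow, powersetCard_eq_filter, sum_filter, eq_comm]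

lemma choose_add_two_add_choose (m j : ℕ) :
    (m + 2).choose (j + 2) + m.choose (j + 2) = 2 * (m + 1).choose (j + 2) + m.choose j := by
  simp only [Nat.choose_succ_succ']
  ring

variable (R : Type*) [CommRing R]

lemma coeff_S_sub_one_comp_two_sub_X (n k : ℕ) :
    ((S R (n - 1)).comp (2 - X)).coeff k = (-1) ^ k * ((n + k).choose (2 * k + 1) : R) := by
  induction n using Nat.twoStepInduction generalizing k with
  | zero => simp [Nat.choose_eq_zero_of_lt (show k < 2 * k + 1 by omega)]
  | one =>
    cases k with
    | zero => simp
    | succ k =>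
      simp [coeff_one, Nat.choose_eq_zero_of_lt (show 1 + (k + 1) < 2 * (k + 1) + 1 by omega)]
  | more n ih₀ ih₁ =>
    have hS : S R ((n + 2 : ℕ) - 1) = X * S R ((n + 1 : ℕ) - 1) - S R (n - 1) := by
      rw [show ((n + 2 : ℕ) - 1 : ℤ) = n + 1 by push_cast; ring, S_add_one,
        show ((n + 1 : ℕ) - 1 : ℤ) = n by push_cast; ring]
    rw [hS, sub_comp, mul_comp, X_comp, sub_mul, coeff_sub, coeff_sub, ih₀, coeff_ofNat_mul]
    cases k with
    | zero =>
      rw [mul_coeff_zero, ih₁]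
      simp only [pow_zero, add_zero, mul_zero, zero_add, Nat.choose_one_right, Nat.cast_add,
        Nat.cast_one, one_mul, coeff_X_zero, zero_mul, sub_zero, Nat.cast_ofNat]
      ring
    | succ k =>
      have h := congrArg (Nat.cast (R := R)) (choose_add_two_add_choose (n + k + 1) (2 * k + 1))
      rw [coeff_X_mul, ih₁, ih₁]
      push_cast at h
      rw [show n + 2 + (k + 1) = n + k + 1 + 2 by ring,
        show 2 * (k + 1) + 1 = 2 * k + 1 + 2 by ring,
        show n + 1 + (k + 1) = n + k + 1 + 1 by ring, show n + (k + 1) = n + k + 1 by ring,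
        show n + 1 + k = n + k + 1 by ring]
      linear_combination (-1) ^ k * h

/-- The absolute value of the coefficient of `x ^ k` in `W_n(2 - x)`. -/
def chebyshevWCoeff (n k : ℕ) : ℕ := (n + k + 1).choose (2 * k + 1) + (n + k).choose (2 * k + 1)

lemma coeff_chebyshevW_comp_two_sub_X (n k : ℕ) :
    ((chebyshevW R n).comp (2 - X)).coeff k = (-1) ^ k * (chebyshevWCoeff n k : R) := by
  have h := coeff_S_sub_one_comp_two_sub_X R (n + 1) k
  rw [Nat.cast_add, Nat.cast_one, add_sub_cancel_right, add_right_comm] at h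
  rw [chebyshevW, add_comp, coeff_add, h, coeff_S_sub_one_comp_two_sub_X, chebyshevWCoeff,
    Nat.cast_add, mul_add]

lemma chebyshevWCoeff_eq_zero_of_lt {n k : ℕ} (h : n < k) : chebyshevWCoeff n k = 0 := by
  rw [chebyshevWCoeff, Nat.choose_eq_zero_of_lt (by omega), Nat.choose_eq_zero_of_lt (by omega)]

lemma factorial_mul_chebyshevWCoeff (n k : ℕ) :
    (2 * k + 1).factorial * chebyshevWCoeff n k = (2 * n + 1) * (n + k).descFactorial (2 * k) := by
  rw [chebyshevWCoeff, mul_add, ← Nat.descFactorial_eq_factorial_mul_choose,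
    ← Nat.descFactorial_eq_factorial_mul_choose, Nat.succ_descFactorial_succ,
    Nat.descFactorial_succ, ← add_mul]
  rcases lt_or_ge n k with h | h
  · rw [Nat.descFactorial_of_lt (by omega), mul_zero, mul_zero]
  · congr 1
    omega

lemma factorial_mul_chebyshevWCoeff_eq_div {K : Type*} [Field K] [CharZero K] {n k : ℕ}
    (h : k ≤ n) :
    ((2 * k + 1).factorial : K) * chebyshevWCoeff n k =
      (2 * n + 1) * ((n + k).factorial / (n - k).factorial) := by
  have hdesc := Nat.factorial_mul_descFactorial (show 2 * k ≤ n + k by omega)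
  rw [show n + k - 2 * k = n - k by omega] at hdesc
  rw [← hdesc, Nat.cast_mul, mul_div_cancel_left₀ _ (mod_cast (n - k).factorial_ne_zero)]
  exact_mod_cast factorial_mul_chebyshevWCoeff n k

lemma chebyshevWCoeff_le (n k : ℕ) :
    chebyshevWCoeff n k ≤ 2 * (n + (2 * k + 1)).choose (2 * k + 1) := by
  have h₁ : (n + k + 1).choose (2 * k + 1) ≤ (n + (2 * k + 1)).choose (2 * k + 1) :=
    Nat.choose_le_choose _ (by omega)
  have h₂ : (n + k).choose (2 * k + 1) ≤ (n + (2 * k + 1)).choose (2 * k + 1) :=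
    Nat.choose_le_choose _ (by omega)
  rw [chebyshevWCoeff]
  omega

theorem qPochhammer_sq_mul_sum_powersetCard {K : Type*} [Field K] {q : K}
    (hq : ∀ n, q ^ (n + 1) ≠ 1) (N k : ℕ) :
    qPochhammer q N ^ 2 *
        ∑ s ∈ (range N).powersetCard k, ∏ i ∈ s, q ^ (i + 1) / (1 - q ^ (i + 1)) ^ 2 =
      ∑ n ∈ range (N + 1), tripleCoeff q N n * ((-1) ^ k * chebyshevWCoeff n k) := by
  have factor (i : ℕ) : (1 - C (q ^ (i + 1)) * X + C (q ^ (i + 1)) ^ 2).comp (2 - X) =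
      C ((1 - q ^ (i + 1)) ^ 2) * (1 + C (q ^ (i + 1) / (1 - q ^ (i + 1)) ^ 2) * X) := by
    have h : (1 - q ^ (i + 1)) ^ 2 ≠ 0 := pow_ne_zero 2 (sub_ne_zero.mpr (hq i).symm)
    rw [mul_add, ← mul_assoc, ← C_mul, mul_div_cancel₀ _ h]
    simp only [map_pow, add_comp, sub_comp, one_comp, mul_comp, pow_comp, C_comp, X_comp, map_sub,
      map_one, mul_one]
    ring
  have h := congrArg (fun p => (p.comp (2 - X)).coeff k) (prod_one_sub_mul_X_add_sq_eq_sum q N)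
  simpa only [qPochhammer, Polynomial.prod_comp, factor, prod_mul_distrib, ← map_prod, prod_pow,
    coeff_C_mul, coeff_prod_one_add_C_mul_X, Polynomial.sum_comp, finsetSum_coeff, mul_comp, C_comp,
    coeff_chebyshevW_comp_two_sub_X] using h

end Coefficients

section PowersetCard

lemma tendsto_sum_powersetCard_range {R : Type*} [NormedCommRing R] [NormOneClass R]
    [CompleteSpace R] {f : ℕ → R} (hf : Summable fun i => ‖f i‖) (k : ℕ) :
    Tendsto (fun N => ∑ s ∈ (range N).powersetCard k, ∏ i ∈ s, f i) atTop
      (𝓝 (∑' s : Set.powersetCard ℕ k, ∏ i ∈ (s : Finset ℕ), f i)) := by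
  classical
  have hsub := (summable_finsetProd_of_summable_norm hf).subtype (Set.powersetCard ℕ k)
  have hsum : HasSum ((Set.powersetCard ℕ k).indicator fun s => ∏ i ∈ s, f i) _ :=
    hasSum_subtype_iff_indicator.mp hsub.hasSum
  refine (hsum.comp (tendsto_finset_powerset_atTop_atTop.comp tendsto_finset_range)).congr
    fun N => ?_
  simp only [Function.comp_apply, powersetCard_eq_filter, sum_filter, Set.indicator_apply,
    Set.powersetCard.mem_iff]

/-- Strictly increasing `k`-tuples of natural numbers, shifted by one, are the strictly increasing
`k`-tuples of positive integers over which `macA` sums. -/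
def orderEmbEquivPosStrictMono (k : ℕ) :
    (Fin k ↪o ℕ) ≃ {m : Fin k → ℕ // StrictMono m ∧ ∀ i, 0 < m i} where
  toFun e := ⟨fun i => e i + 1, fun _ _ h => Nat.succ_lt_succ (e.strictMono h),
    fun _ => Nat.succ_pos _⟩
  invFun m := OrderEmbedding.ofStrictMono (fun i => m.1 i - 1) fun i _ h =>
    Nat.sub_lt_sub_right (m.2.2 i) (m.2.1 h)
  left_inv _ := rfl
  right_inv m := Subtype.ext <| funext fun i => Nat.sub_add_cancel (m.2.2 i)

lemma macA_eq_tsum_powersetCard (k : ℕ) (q : ℂ) :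
    macA k q = ∑' s : Set.powersetCard ℕ k,
      ∏ i ∈ (s : Finset ℕ), q ^ (i + 1) / (1 - q ^ (i + 1)) ^ 2 := by
  rw [macA, ← (orderEmbEquivPosStrictMono k).tsum_eq,
    ← (Set.powersetCard.ofFinEmbEquiv (n := k) (I := ℕ)).tsum_eq]
  refine tsum_congr fun e => ?_
  rw [Set.powersetCard.ofFinEmbEquiv_apply, Set.powersetCard.val_ofFinEmb, prod_map,
    prod_div_distrib, prod_pow_eq_pow_sum]
  rfl

end PowersetCard

section Limit

variable {𝕜 : Type*} [NormedField 𝕜] {q : 𝕜}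

lemma pow_succ_ne_one_of_norm_lt_one (hq : ‖q‖ < 1) (n : ℕ) : q ^ (n + 1) ≠ 1 := fun h =>
  (pow_lt_one₀ (norm_nonneg q) hq n.succ_ne_zero).ne (by rw [← norm_pow, h, norm_one])

lemma summable_norm_pow_succ (hq : ‖q‖ < 1) : Summable fun n : ℕ => ‖q ^ (n + 1)‖ :=
  (summable_nat_add_iff (f := fun n => ‖q ^ n‖) 1).mpr (summable_norm_geometric_of_norm_lt_one hq)

lemma summable_norm_pow_succ_div_one_sub_sq (hq : ‖q‖ < 1) :
    Summable fun i : ℕ => ‖q ^ (i + 1) / (1 - q ^ (i + 1)) ^ 2‖ := by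
  refine .of_nonneg_of_le (fun _ => norm_nonneg _) (fun i => ?_)
    ((summable_norm_pow_succ hq).mul_right ((1 - ‖q‖) ^ 2)⁻¹)
  have hpos : 0 < 1 - ‖q‖ := sub_pos.mpr hq
  have hle : 1 - ‖q‖ ≤ ‖1 - q ^ (i + 1)‖ := calc
    1 - ‖q‖ ≤ 1 - ‖q‖ ^ (i + 1) :=
      sub_le_sub_left (pow_le_of_le_one (norm_nonneg q) hq.le i.succ_ne_zero) 1
    _ = ‖(1 : 𝕜)‖ - ‖q ^ (i + 1)‖ := by rw [norm_one, norm_pow]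
    _ ≤ ‖1 - q ^ (i + 1)‖ := norm_sub_norm_le _ _
  rw [norm_div, norm_pow (1 - q ^ (i + 1)), div_eq_mul_inv]
  exact mul_le_mul_of_nonneg_left
    (inv_anti₀ (pow_pos hpos 2) (pow_le_pow_left₀ hpos.le hle 2)) (norm_nonneg _)

lemma summable_pow_mul_norm_chebyshevWCoeff {r : ℝ} (hr₀ : 0 ≤ r) (hr : r < 1) (k : ℕ) :
    Summable fun n => r ^ n * ‖(-1) ^ k * (chebyshevWCoeff n k : 𝕜)‖ := by
  have hsum := summable_choose_mul_geometric_of_norm_lt_one (2 * k + 1)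
    (show ‖r‖ < 1 by rwa [Real.norm_of_nonneg hr₀])
  refine .of_nonneg_of_le (fun n => by positivity) (fun n => ?_) (hsum.mul_left 2)
  have hle : (chebyshevWCoeff n k : ℝ) ≤ 2 * (n + (2 * k + 1)).choose (2 * k + 1) :=
    mod_cast chebyshevWCoeff_le n k
  calc r ^ n * ‖(-1) ^ k * (chebyshevWCoeff n k : 𝕜)‖
      ≤ r ^ n * chebyshevWCoeff n k := by
        gcongr
        simpa using Nat.norm_cast_le (α := 𝕜) (chebyshevWCoeff n k)
    _ ≤ r ^ n * (2 * (n + (2 * k + 1)).choose (2 * k + 1)) := by gcongr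
    _ = 2 * ((n + (2 * k + 1)).choose (2 * k + 1) * r ^ n) := by ring

variable [CompleteSpace 𝕜]

lemma tendsto_qPochhammer (hq : ‖q‖ < 1) :
    Tendsto (qPochhammer q) atTop (𝓝 (∏' m : ℕ, (1 - q ^ (m + 1)))) := by
  have h := multipliable_one_add_of_summable (f := fun m : ℕ => -q ^ (m + 1))
    (by simpa only [norm_neg] using summable_norm_pow_succ hq)
  simp only [← sub_eq_add_neg] at h
  exact h.hasProd.tendsto_prod_nat

lemma tprod_one_sub_pow_succ_ne_zero (hq : ‖q‖ < 1) : ∏' m : ℕ, (1 - q ^ (m + 1)) ≠ 0 := by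
  simp only [sub_eq_add_neg]
  refine tprod_one_add_ne_zero_of_summable (fun m => ?_)
    (by simpa only [norm_neg] using summable_norm_pow_succ hq)
  rw [← sub_eq_add_neg]
  exact sub_ne_zero.mpr (pow_succ_ne_one_of_norm_lt_one hq m).symm

lemma tendsto_gaussBinom_add (hq : ‖q‖ < 1) {ι : Type*} {l : Filter ι} {u v : ι → ℕ}
    (hu : Tendsto u l atTop) (hv : Tendsto v l atTop) :
    Tendsto (fun i => gaussBinom q (u i + v i) (v i)) l
      (𝓝 (∏' m : ℕ, (1 - q ^ (m + 1)))⁻¹) := by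
  have hP := tprod_one_sub_pow_succ_ne_zero hq
  have lim := tendsto_qPochhammer hq
  have huv : Tendsto (fun i => u i + v i) l atTop :=
    tendsto_atTop_mono (fun _ => Nat.le_add_right _ _) hu
  have h := (lim.comp huv).div ((lim.comp hv).mul (lim.comp hu))
    (mul_ne_zero hP hP)
  rw [div_mul_cancel_left₀ hP] at h
  exact h.congr fun i => (gaussBinom_add_eq_div (pow_succ_ne_one_of_norm_lt_one hq) _ _).symm

lemma exists_norm_gaussBinom_le (hq : ‖q‖ < 1) : ∃ B, ∀ n k, ‖gaussBinom q n k‖ ≤ B := by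
  have lim := tendsto_qPochhammer hq
  obtain ⟨B, hB⟩ := lim.norm.bddAbove_range
  obtain ⟨D, hD⟩ := (lim.inv₀ (tprod_one_sub_pow_succ_ne_zero hq)).norm.bddAbove_range
  replace hB (n : ℕ) : ‖qPochhammer q n‖ ≤ B := hB ⟨n, rfl⟩
  replace hD (n : ℕ) : ‖(qPochhammer q n)⁻¹‖ ≤ D := hD ⟨n, rfl⟩
  have hB₀ : 0 ≤ B := (norm_nonneg _).trans (hB 0)
  have hD₀ : 0 ≤ D := (norm_nonneg _).trans (hD 0)
  refine ⟨B * (D * D), fun n k => ?_⟩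
  rcases lt_or_ge n k with h | h
  · rw [gaussBinom_eq_zero_of_lt q h, norm_zero]
    positivity
  · obtain ⟨m, rfl⟩ := Nat.exists_eq_add_of_le' h
    rw [gaussBinom_add_eq_div (pow_succ_ne_one_of_norm_lt_one hq), div_eq_mul_inv, mul_inv,
      norm_mul, norm_mul]
    gcongr <;> apply_rules

lemma tendsto_tripleCoeff (hq : ‖q‖ < 1) (n : ℕ) :
    Tendsto (fun N => tripleCoeff q N n) atTop
      (𝓝 ((-1) ^ n * q ^ ((n + 1).choose 2) * (∏' m : ℕ, (1 - q ^ (m + 1)))⁻¹)) := by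
  have h := tendsto_gaussBinom_add hq (tendsto_sub_atTop_nat n)
    (tendsto_add_atTop_nat (n + 1))
  refine (h.const_mul _).congr' ?_
  filter_upwards [eventually_ge_atTop n] with N hN
  rw [tripleCoeff, show N - n + (N + (n + 1)) = 2 * N + 1 by omega, add_assoc N]

lemma exists_norm_tripleCoeff_le (hq : ‖q‖ < 1) :
    ∃ B, ∀ N n, ‖tripleCoeff q N n‖ ≤ B * ‖q‖ ^ n := by
  obtain ⟨B, hB⟩ := exists_norm_gaussBinom_le hq
  refine ⟨B, fun N n => ?_⟩
  have hn : n ≤ (n + 1).choose 2 := by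
    rw [Nat.choose_succ_succ' n 1, Nat.choose_one_right]
    exact Nat.le_add_right _ _
  have hpow : ‖q‖ ^ ((n + 1).choose 2) ≤ ‖q‖ ^ n :=
    pow_le_pow_of_le_one (norm_nonneg q) hq.le hn
  simp only [tripleCoeff, norm_mul, norm_pow, norm_neg, norm_one, one_pow, one_mul]
  rw [mul_comm B]
  gcongr
  exact hB _ _

lemma tendsto_sum_tripleCoeff_mul (hq : ‖q‖ < 1) {c : ℕ → 𝕜}
    (hc : Summable fun n => ‖q‖ ^ n * ‖c n‖) :
    Tendsto (fun N => ∑ n ∈ range (N + 1), tripleCoeff q N n * c n) atTop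
      (𝓝 ((∏' m : ℕ, (1 - q ^ (m + 1)))⁻¹ *
        ∑' n, (-1) ^ n * q ^ ((n + 1).choose 2) * c n)) := by
  obtain ⟨B, hB⟩ := exists_norm_tripleCoeff_le hq
  have h : Tendsto (fun N => ∑' n, tripleCoeff q N n * c n) atTop _ :=
    tendsto_tsum_of_dominated_convergence (hc.mul_left B)
      (fun n => (tendsto_tripleCoeff hq n).mul_const (c n)) (.of_forall fun N n => by
        rw [norm_mul, ← mul_assoc]
        gcongr
        exact hB N n)
  have hlim : (∏' m : ℕ, (1 - q ^ (m + 1)))⁻¹ * ∑' n, (-1) ^ n * q ^ ((n + 1).choose 2) * c n =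
      ∑' n, (-1) ^ n * q ^ ((n + 1).choose 2) * (∏' m : ℕ, (1 - q ^ (m + 1)))⁻¹ * c n := by
    rw [← tsum_mul_left]
    exact tsum_congr fun n => by ring
  rw [hlim]
  refine h.congr fun N => tsum_eq_sum fun n hn => ?_
  rw [tripleCoeff_eq_zero_of_lt q (by simpa using hn), zero_mul]

theorem tprod_cube_mul_tsum_powersetCard (hq : ‖q‖ < 1) (k : ℕ) :
    (∏' m : ℕ, (1 - q ^ (m + 1))) ^ 3 * ∑' s : Set.powersetCard ℕ k,
        ∏ i ∈ (s : Finset ℕ), q ^ (i + 1) / (1 - q ^ (i + 1)) ^ 2 =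
      ∑' n, (-1) ^ n * q ^ ((n + 1).choose 2) * ((-1) ^ k * (chebyshevWCoeff n k : 𝕜)) := by
  have left := ((tendsto_qPochhammer hq).pow 2).mul
    (tendsto_sum_powersetCard_range (f := fun i => q ^ (i + 1) / (1 - q ^ (i + 1)) ^ 2)
      (summable_norm_pow_succ_div_one_sub_sq hq) k)
  have right := tendsto_sum_tripleCoeff_mul hq
    (summable_pow_mul_norm_chebyshevWCoeff (𝕜 := 𝕜) (norm_nonneg q) hq k)
  simp only [qPochhammer_sq_mul_sum_powersetCard (pow_succ_ne_one_of_norm_lt_one hq)] at left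
  rw [pow_succ', mul_assoc, tendsto_nhds_unique left right,
    mul_inv_cancel_left₀ (tprod_one_sub_pow_succ_ne_zero hq)]

end Limit

theorem stmt2 (k : ℕ) (hk : 1 ≤ k) (q : ℂ) (hq : ‖q‖ < 1) :
    ((2 * k + 1).factorial : ℂ) * (∏' m : ℕ, (1 - q ^ (m + 1))) ^ 3 * macA k q =
      (-1) ^ k * ∑' n : {n : ℕ // k ≤ n},
        (-1) ^ (n : ℕ) * (2 * (n : ℕ) + 1) *
          ((((n : ℕ) + k).factorial : ℂ) / (((n : ℕ) - k).factorial : ℂ)) *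
            q ^ (((n : ℕ) * ((n : ℕ) + 1)) / 2) := by
  rw [mul_assoc, macA_eq_tsum_powersetCard, tprod_cube_mul_tsum_powersetCard hq, ← tsum_mul_left,
    ← tsum_mul_left]
  have hsupp : Function.support (fun n : ℕ => ((2 * k + 1).factorial : ℂ) *
      ((-1) ^ n * q ^ ((n + 1).choose 2) * ((-1) ^ k * chebyshevWCoeff n k))) ⊆ {n | k ≤ n} :=
    Function.support_subset_iff'.mpr fun n hn => by
      rw [chebyshevWCoeff_eq_zero_of_lt (not_le.mp hn)]
      simp
  rw [← tsum_subtype_eq_of_support_subset hsupp]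
  refine tsum_congr fun ⟨n, hn⟩ => ?_
  have hcoeff := factorial_mul_chebyshevWCoeff_eq_div (K := ℂ) hn
  rw [Nat.choose_two_right, Nat.add_sub_cancel, mul_comm (n + 1)]
  linear_combination (-1) ^ n * q ^ (n * (n + 1) / 2) * (-1) ^ k * hcoeff
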